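/- Let d ≥ 1, n ≥ 1, N ≥ 1, let u_0, …, u_{N-1} ∈ ℝ^n, and let U be the N × n^d real matrix with columns indexed by tuples (i_1,…,i_d) ∈ {1,…,n}^d and entries U_{t,(i_1,…,i_d)} = ∏_{k=1}^{d} (u_t)_{i_k}. Suppose the inputs are persistently exciting of order d, i.e. rank(U) = C(n - 1 + d, d). Let y ∈ ℝ^N and let v ∈ ℝ^{n^d} be any solution of U v = y. Then the symmetrization Sym(v), defined by Sym(v)_{(i_1,…,i_d)} = (1/d!) ∑_{σ ∈ S_d} v_{(i_{σ(1)},…,i_{σ(d)})}, is the minimum-norm solution of the system: U · Sym(v) = y and ‖Sym(v)‖₂ ≤ ‖w‖₂ for every w ∈ ℝ^{n^d} with U w = y. -/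

import Mathlib

/-!
The rows of `U` are symmetric tensors, so `U` cannot distinguish `v` from any of its index
permutations, nor from their average `Sym(v)`; this gives `U · Sym(v) = y` without any rank
assumption.

For minimality, the space of symmetric tensors has dimension at most the number
`C(n - 1 + d, d)` of multisets of size `d` in `{1,…,n}`, since a symmetric tensor is determined by
its values on multisets (`finrank_symTensors_le`). Under persistent excitation the row space of `U`
has at least this dimension, so it is the whole space of symmetric tensors
(`span_row_eq_symTensors`). Hence `Sym(v) = Uᵀ c` for some `c`. If `U w = y`, then `w - Sym(v)` lies
in `ker U` and is orthogonal to `Uᵀ c = Sym(v)`, so Pythagoras gives the inequality.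
-/


/-- The symmetrization of a vector `v ∈ ℝ^{n^d}` indexed by tuples:
`Sym(v)_{(i_1,…,i_d)} = (1/d!) ∑_{σ ∈ S_d} v_{(i_{σ(1)},…,i_{σ(d)})}`. -/
noncomputable def symVec (d n : ℕ) (v : (Fin d → Fin n) → ℝ) : (Fin d → Fin n) → ℝ :=
  fun i => (1 / (Nat.factorial d : ℝ)) * ∑ σ : Equiv.Perm (Fin d), v (i ∘ σ)

/-- The subspace of symmetric vectors of `ℝ^{n^d}`: those invariant under permuting the index
tuple. -/
def symTensors (d n : ℕ) : Submodule ℝ ((Fin d → Fin n) → ℝ) where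
  carrier := {v | ∀ (σ : Equiv.Perm (Fin d)) (i : Fin d → Fin n), v (i ∘ σ) = v i}
  zero_mem' := fun _ _ => rfl
  add_mem' := fun ha hb σ i => by simp [ha σ i, hb σ i]
  smul_mem' := fun c a ha σ i => by simp [ha σ i]

/-- The multiset of entries of an index tuple. -/
def tupleSym (d n : ℕ) (i : Fin d → Fin n) : Sym (Fin n) d :=
  ⟨(List.ofFn i : Multiset (Fin n)), by simp⟩

/-- Tuples with the same multiset of entries have the same sorted rearrangement. -/
theorem comp_sort_eq_of_tupleSym_eq {d n : ℕ} {i j : Fin d → Fin n}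
    (h : tupleSym d n i = tupleSym d n j) : i ∘ Tuple.sort i = j ∘ Tuple.sort j := by
  have hp : (List.ofFn i).Perm (List.ofFn j) := Multiset.coe_eq_coe.1 (congrArg Subtype.val h)
  apply List.ofFn_injective
  exact (((Tuple.sort i).ofFn_comp_perm i).trans
    (hp.trans ((Tuple.sort j).ofFn_comp_perm j).symm)).eq_of_pairwise'
      (Tuple.monotone_sort i).sortedLE_ofFn.pairwise (Tuple.monotone_sort j).sortedLE_ofFn.pairwise

/-- A symmetric vector factors through `tupleSym`, so stars and bars bounds the dimension. -/
theorem finrank_symTensors_le (d n : ℕ) :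
    Module.finrank ℝ (symTensors d n) ≤ (n + d - 1).choose d := by
  have hle : symTensors d n ≤ LinearMap.range (LinearMap.funLeft ℝ ℝ (tupleSym d n)) := by
    intro v hv
    have hf : Function.FactorsThrough v (tupleSym d n) := fun i j h => by
      rw [← hv (Tuple.sort i) i, ← hv (Tuple.sort j) j, comp_sort_eq_of_tupleSym_eq h]
    obtain ⟨e, he⟩ := (Function.factorsThrough_iff v).1 hf
    exact ⟨e, he.symm⟩
  calc Module.finrank ℝ (symTensors d n)
      ≤ Module.finrank ℝ (LinearMap.range (LinearMap.funLeft ℝ ℝ (tupleSym d n))) :=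
        Submodule.finrank_mono hle
    _ ≤ Module.finrank ℝ (Sym (Fin n) d → ℝ) := LinearMap.finrank_range_le _
    _ = (n + d - 1).choose d := by
        rw [Module.finrank_fintype_fun_eq_card, Sym.card_sym_eq_choose, Fintype.card_fin]

/-- A matrix with symmetric rows and the largest possible rank has all symmetric vectors in its row
space. -/
theorem span_row_eq_symTensors {d n N : ℕ} (hn : 1 ≤ n) {U : Matrix (Fin N) (Fin d → Fin n) ℝ}
    (hsym : ∀ t, U t ∈ symTensors d n) (hrank : U.rank = (n - 1 + d).choose d) :
    Submodule.span ℝ (Set.range U.row) = symTensors d n := by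
  apply Submodule.eq_of_le_of_finrank_le
  · rw [Submodule.span_le]
    rintro _ ⟨t, rfl⟩
    exact hsym t
  · rw [← Matrix.rank_eq_finrank_span_row, hrank, show n - 1 + d = n + d - 1 by omega]
    exact finrank_symTensors_le d n

theorem symVec_mem_symTensors (d n : ℕ) (v : (Fin d → Fin n) → ℝ) :
    symVec d n v ∈ symTensors d n := by
  intro τ i
  unfold symVec
  congr 1
  exact Fintype.sum_equiv (Equiv.mulLeft τ) _ _ fun σ => rfl

/-- Pairing with a symmetric vector does not see symmetrization. -/
theorem dotProduct_symVec {d n : ℕ} {a : (Fin d → Fin n) → ℝ} (ha : a ∈ symTensors d n)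
    (v : (Fin d → Fin n) → ℝ) : a ⬝ᵥ symVec d n v = a ⬝ᵥ v := by
  have hσ : ∀ σ : Equiv.Perm (Fin d), ∑ i, a i * v (i ∘ σ) = ∑ i, a i * v i := fun σ =>
    Fintype.sum_equiv (Equiv.arrowCongr σ.symm (Equiv.refl (Fin n))) _ _ fun i => by
      change a i * v (i ∘ σ) = a (i ∘ σ) * v (i ∘ σ)
      rw [ha σ i]
  have hd : (d.factorial : ℝ) ≠ 0 := by exact_mod_cast d.factorial_ne_zero
  calc a ⬝ᵥ symVec d n v
      = (1 / (d.factorial : ℝ)) * ∑ σ : Equiv.Perm (Fin d), ∑ i, a i * v (i ∘ σ) := by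
        rw [Finset.sum_comm, Finset.mul_sum]
        refine Finset.sum_congr rfl fun i _ => ?_
        rw [← Finset.mul_sum]
        unfold symVec
        ring
    _ = a ⬝ᵥ v := by
        simp only [hσ, Finset.sum_const, Finset.card_univ, Fintype.card_perm, Fintype.card_fin,
          nsmul_eq_mul, dotProduct]
        field_simp

/-- If the inputs are persistently exciting of order `d`,
i.e. `rank(U) = C(n - 1 + d, d)` where `U` is the matrix whose `t`-th row is
the `d`-fold Kronecker power `(u_t^{⊗d})ᵀ`, and `v` is any solution of
`U v = y`, then the symmetrization `Sym(v)` is the minimum-norm solution: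
`U · Sym(v) = y` and `‖Sym(v)‖₂ ≤ ‖w‖₂` (Euclidean norm) for every solution
`w` of `U w = y`. -/
theorem symmetrization_is_min_norm_solution
    (d n N : ℕ) (hd : 1 ≤ d) (hn : 1 ≤ n) (hN : 1 ≤ N)
    (u : Fin N → Fin n → ℝ)
    (U : Matrix (Fin N) (Fin d → Fin n) ℝ)
    (hU : ∀ (t : Fin N) (i : Fin d → Fin n), U t i = ∏ k : Fin d, u t (i k))
    (hrank : U.rank = Nat.choose (n - 1 + d) d)
    (y : Fin N → ℝ) (v : (Fin d → Fin n) → ℝ)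
    (hv : U.mulVec v = y) :
    U.mulVec (symVec d n v) = y ∧
      ∀ w : (Fin d → Fin n) → ℝ, U.mulVec w = y →
        Real.sqrt (∑ i, symVec d n v i ^ 2) ≤ Real.sqrt (∑ i, w i ^ 2) := by
  have hsym : ∀ t, U t ∈ symTensors d n := fun t σ i => by
    simp only [hU, Function.comp_apply]
    exact Equiv.prod_comp σ fun k => u t (i k)
  have hs : U.mulVec (symVec d n v) = y := by
    rw [← hv]
    funext t
    exact dotProduct_symVec (hsym t) v
  refine ⟨hs, fun w hw => Real.sqrt_le_sqrt ?_⟩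
  obtain ⟨c, hc⟩ : symVec d n v ∈ LinearMap.range U.vecMulLinear := by
    rw [range_vecMulLinear, span_row_eq_symTensors hn hsym hrank]
    exact symVec_mem_symTensors d n v
  have horth : symVec d n v ⬝ᵥ (w - symVec d n v) = 0 := by
    nth_rewrite 1 [← hc]
    rw [Matrix.vecMulLinear_apply, ← Matrix.dotProduct_mulVec, Matrix.mulVec_sub, hs, hw, sub_self,
      dotProduct_zero]
  have hpyth : ∑ i, w i ^ 2 = ∑ i, symVec d n v i ^ 2
      + 2 * (symVec d n v ⬝ᵥ (w - symVec d n v)) + ∑ i, (w i - symVec d n v i) ^ 2 := by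
    rw [dotProduct, Finset.mul_sum, ← Finset.sum_add_distrib, ← Finset.sum_add_distrib]
    refine Finset.sum_congr rfl fun i _ => ?_
    rw [Pi.sub_apply]
    ring
  have hnonneg : 0 ≤ ∑ i, (w i - symVec d n v i) ^ 2 :=
    Finset.sum_nonneg fun i _ => sq_nonneg _
  linarith
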